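/- arXiv:2508.12113 — 2 statements merged into one kernel-verified Lean document; each statement's English description precedes it below -/
import Mathlib

section
/- Let K have characteristic zero and let A be an arrangement of d distinct lines in ℙ² that is a union of disconnected pencils, i.e., setting S₀(A) = {P ∈ S(A) : t_P ≥ 3}, no line of A contains two or more points of S₀(A). Then the arrangement A is free — meaning the Jacobian ideal Jac(f_A) is saturated — if and only if either (a) all d lines of A are concurrent, or (b) d − 1 of the lines of A pass through a common point P and the remaining line does not contain P. Equivalently, if A is a union of disconnected pencils not of type (a) or (b), then Jac(f_A) is not saturated, so A is not free. -/
open MvPolynomial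

/-- The Jacobian ideal of `f`, generated by all partial derivatives of `f`. -/
noncomputable def jacobianIdeal {K : Type*} [CommRing K] {m : ℕ}
    (f : MvPolynomial (Fin m) K) : Ideal (MvPolynomial (Fin m) K) :=
  Ideal.span (Set.range fun i => pderiv i f)

/-- The top support `S(A)` of the singular locus of the arrangement defined by the linear
forms `L i`: the (ideals `I_P` of the) points cut out by two distinct lines of the
arrangement. -/
def singSupp {K : Type*} [CommRing K] {m d : ℕ} (L : Fin d → MvPolynomial (Fin m) K) :
    Set (Ideal (MvPolynomial (Fin m) K)) :=
  {I | ∃ i j : Fin d, i ≠ j ∧ I = Ideal.span {L i, L j}}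

open Classical in
/-- `t_P`: the number of lines of the arrangement containing `P`. -/
noncomputable def tOf {K : Type*} [CommRing K] {m d : ℕ}
    (L : Fin d → MvPolynomial (Fin m) K) (P : Ideal (MvPolynomial (Fin m) K)) : ℕ :=
  (Finset.univ.filter (fun i => L i ∈ P)).card

/-!
A polynomial killed by a constant derivation `∂_q`, `q ≠ 0`, has a `∂_q`-stable Jacobian ideal, and
in characteristic zero an ideal stable under such a locally nilpotent derivation is saturated. This
settles concurrent lines; for a further line `z` off their common point one has
`J(z g) = J(g) ∩ (g, z)`, where `(g, z)` is saturated as well.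

Conversely let `B` be an isolated pencil and `a` a constant vector. Checking one prime at a time
shows that `h = (∏_{i ∉ B} L i) * ∂_a (∏_{i ∈ B} L i)` lies in the saturation of `J(f)`. If `J(f)`
is saturated, then `h = E f` for some derivation `E`, and comparing both sides modulo each `L i`
shows that the constant part `v` of `E` satisfies `L i (v) = L i (a)` for `i ∈ B` and `L i (v) = 0`
for `i ∉ B`. Two lines off the pencil would confine `v` to the line spanned by their intersection,
while `a - v` lies on the line spanned by the center of `B`; as `a` is arbitrary, `K ^ 3` would be
the sum of two lines. A single isolated pencil is enough for this.
-/

open scoped Matrix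

section LinearForms

variable {R K σ : Type*} [CommRing R] [Field K] [Fintype σ]

/-- The linear form `∑ a, c a • X a` with coefficient vector `c`. -/
noncomputable def linForm : (σ → R) →ₗ[R] MvPolynomial σ R :=
  Fintype.linearCombination R X

lemma linForm_apply (c : σ → R) : linForm c = ∑ a, C (c a) * X a := by
  simp only [linForm, Fintype.linearCombination_apply, smul_eq_C_mul]

lemma eval_linForm (v c : σ → R) : eval v (linForm c) = c ⬝ᵥ v := by
  simp [linForm_apply, dotProduct]

lemma isHomogeneous_linForm (c : σ → R) : (linForm c).IsHomogeneous 1 := by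
  rw [linForm_apply]
  exact IsHomogeneous.sum _ _ _ fun a _ => isHomogeneous_C_mul_X (c a) a

lemma exists_linForm_eq {p : MvPolynomial σ R} (hp : p.IsHomogeneous 1) :
    ∃ c, linForm c = p := by
  rw [← mem_homogeneousSubmodule, homogeneousSubmodule_one_eq_span_X] at hp
  exact (Submodule.mem_span_range_iff_exists_fun R).1 hp

lemma linForm_injective : Function.Injective (linForm : (σ → R) → MvPolynomial σ R) := by
  classical
  intro c e h
  ext a
  simpa [eval_linForm] using congrArg (eval (Pi.single a 1)) h

lemma prime_linForm {c : σ → K} (hc : c ≠ 0) : Prime (linForm c) := by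
  have hne : linForm c ≠ 0 := (map_ne_zero_iff _ linForm_injective).2 hc
  refine (irreducible_of_totalDegree_eq_one ((isHomogeneous_linForm c).totalDegree hne)
    fun x hx => ?_).prime
  obtain ⟨s, hs⟩ := ne_zero_iff.1 hne
  exact (ne_zero_of_dvd_ne_zero hs (hx s)).isUnit

lemma exists_dotProduct_eq {κ : Type*} [Finite κ] {c : κ → σ → K} (hc : LinearIndependent K c)
    (x : κ → K) : ∃ v, ∀ i, c i ⬝ᵥ v = x i := by
  have hx : x ∈ Submodule.span K (Set.range (flip c)) := by
    rw [span_flip_eq_top_iff_linearIndependent.2 hc]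
    exact Submodule.mem_top
  obtain ⟨v, rfl⟩ := (Submodule.mem_span_range_iff_exists_fun K).1 hx
  exact ⟨v, fun i => by simp [dotProduct, flip, mul_comm]⟩

lemma not_linForm_dvd_linForm {c e : σ → K} (h : LinearIndependent K ![c, e]) :
    ¬ linForm c ∣ linForm e := by
  rintro ⟨p, hp⟩
  obtain ⟨v, hv⟩ := exists_dotProduct_eq h ![0, 1]
  have hc : c ⬝ᵥ v = 0 := hv 0
  have he : e ⬝ᵥ v = 1 := hv 1
  simpa [eval_linForm, hc, he] using congrArg (eval v) hp

end LinearForms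

section Saturation

variable {R K σ : Type*} [CommRing R] [Field K]

/-- A homogeneous ideal is saturated if it equals its colon ideal by the irrelevant ideal
`(X a)_a`, hence by every power of it. -/
def IsSaturated (I : Ideal (MvPolynomial σ R)) : Prop :=
  I.colon (Ideal.span (Set.range X) : Ideal (MvPolynomial σ R)) = I

lemma isSaturated_iff {I : Ideal (MvPolynomial σ R)} :
    IsSaturated I ↔ ∀ h, (∀ a, X a * h ∈ I) → h ∈ I := by
  have mem_colon (h : MvPolynomial σ R) : h ∈ I.colon (Set.range X) ↔ ∀ a, X a * h ∈ I := by
    simp only [Submodule.mem_colon, Set.forall_mem_range, smul_eq_mul, mul_comm]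
  rw [IsSaturated, Ideal.colon_span, ← Ideal.le_colon.ge_iff_eq']
  exact forall_congr' fun h => by rw [mem_colon]

lemma isSaturated_top : IsSaturated (⊤ : Ideal (MvPolynomial σ R)) :=
  Submodule.top_colon

lemma IsSaturated.inf {I J : Ideal (MvPolynomial σ R)} (hI : IsSaturated I)
    (hJ : IsSaturated J) : IsSaturated (I ⊓ J) := by
  rw [IsSaturated, Submodule.inf_colon, hI, hJ]

lemma IsSaturated.mem_of_pow_le_colon {I : Ideal (MvPolynomial σ R)} (hI : IsSaturated I)
    {h : MvPolynomial σ R} {n : ℕ} (hn : Ideal.span (Set.range X) ^ n ≤ I.colon {h}) : h ∈ I := by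
  induction n generalizing h with
  | zero => simpa using hn
  | succ n ih =>
    refine isSaturated_iff.1 hI h fun a => ih fun r hr => ?_
    have hra : r * X a ∈ I.colon {h} := hn <| by
      rw [pow_succ]
      exact Ideal.mul_mem_mul hr (Ideal.subset_span (Set.mem_range_self a))
    simpa only [Submodule.mem_colon_singleton, smul_eq_mul, mul_assoc] using hra

lemma IsSaturated.mem_of_forall_isPrime [IsNoetherianRing R] [Finite σ]
    {I : Ideal (MvPolynomial σ R)} (hI : IsSaturated I) {h : MvPolynomial σ R}
    (hp : ∀ p : Ideal (MvPolynomial σ R), p.IsPrime → I.colon {h} ≤ p → ∀ a, X a ∈ p) :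
    h ∈ I := by
  have hrad : Ideal.span (Set.range X) ≤ (I.colon {h}).radical := by
    rw [Ideal.radical_eq_sInf, le_sInf_iff]
    rintro p ⟨hle, hprime⟩
    exact Ideal.span_le.2 (Set.range_subset_iff.2 (hp p hprime hle))
  obtain ⟨n, hn⟩ := (I.colon {h}).exists_radical_pow_le_of_fg (IsNoetherian.noetherian _)
  exact hI.mem_of_pow_le_colon ((Ideal.pow_right_mono hrad n).trans hn)

lemma mul_mem_span_mul_pair_iff {A : Type*} [CommRing A] {l g z a : A} (hz : Prime z)
    (hl : ¬ z ∣ l) : l * a ∈ Ideal.span {l * g, z} ↔ a ∈ Ideal.span {g, z} := by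
  simp only [Ideal.mem_span_pair]
  constructor
  · rintro ⟨x, y, hxy⟩
    obtain ⟨b, hb⟩ : z ∣ a - x * g :=
      (hz.dvd_or_dvd (⟨y, by linear_combination -hxy⟩ : z ∣ l * (a - x * g))).resolve_left hl
    exact ⟨x, b, by linear_combination -hb⟩
  · rintro ⟨x, y, rfl⟩
    exact ⟨x, l * y, by ring⟩

lemma IsSaturated.span_mul_pair {l g z : MvPolynomial σ R} (hz : Prime z) (hlz : ¬ z ∣ l)
    (hl : IsSaturated (Ideal.span {l, z})) (hg : IsSaturated (Ideal.span {g, z})) :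
    IsSaturated (Ideal.span {l * g, z}) := by
  rw [isSaturated_iff] at hl hg ⊢
  intro h hh
  have hle : Ideal.span {l * g, z} ≤ Ideal.span {l, z} := by
    rw [Ideal.span_le, Set.insert_subset_iff, Set.singleton_subset_iff]
    exact ⟨Ideal.mul_mem_right _ _ (Ideal.subset_span (by simp)), Ideal.subset_span (by simp)⟩
  obtain ⟨a, b, rfl⟩ := Ideal.mem_span_pair.1 (hl h fun i => hle (hh i))
  have hz_mem (p : MvPolynomial σ R) : p * z ∈ Ideal.span {l * g, z} :=
    Ideal.mul_mem_left _ _ (Ideal.subset_span (by simp))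
  have ha : a ∈ Ideal.span {g, z} := hg a fun i => by
    rw [← mul_mem_span_mul_pair_iff hz hlz]
    convert sub_mem (hh i) (hz_mem (X i * b)) using 1
    ring
  rw [mul_comm a l]
  exact add_mem ((mul_mem_span_mul_pair_iff hz hlz).2 ha) (hz_mem b)

end Saturation

section Derivations

variable {R K σ A : Type*} [CommRing R] [Field K] [CommRing A] [Algebra K A]

lemma mem_of_pow_mul_mem_of_derivation_mem [CharZero K] {D : Derivation K A A} {I : Ideal A}
    (hI : ∀ g ∈ I, D g ∈ I) {l h : A} (hl : IsUnit (D l)) (hDh : D h ∈ I) {k : ℕ}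
    (hk : l ^ k * h ∈ I) : h ∈ I := by
  induction k with
  | zero => simpa using hk
  | succ k ih =>
    have hsum : D (l ^ (k + 1) * h) =
        l ^ (k + 1) * D h + algebraMap K A (k + 1 : K) * D l * (l ^ k * h) := by
      simp only [Derivation.leibniz, Derivation.leibniz_pow, smul_eq_mul, nsmul_eq_mul,
        Nat.add_sub_cancel, map_add, map_natCast, map_one, Nat.cast_add, Nat.cast_one]
      ring
    have hunit : IsUnit (algebraMap K A (k + 1 : K) * D l) :=
      ((IsUnit.mk0 _ k.cast_add_one_ne_zero).map _).mul hl
    refine ih ((Ideal.unit_mul_mem_iff_mem I hunit).1 ?_)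
    exact (add_mem_cancel_left (I.mul_mem_left _ hDh)).1 (hsum ▸ hI _ hk)

lemma mem_of_pow_mul_mem_of_iterate_derivation_eq_zero [CharZero K] {D : Derivation K A A}
    {I : Ideal A} (hI : ∀ g ∈ I, D g ∈ I) {l : A} (hl : IsUnit (D l)) {n : ℕ} {h : A}
    (hn : D^[n] h = 0) {k : ℕ} (hk : l ^ k * h ∈ I) : h ∈ I := by
  induction n generalizing h k with
  | zero => exact (show h = 0 from hn) ▸ I.zero_mem
  | succ n ih =>
    have hDh : l ^ (k + 1) * D h = l * D (l ^ k * h) - k • (D l * (l ^ k * h)) := by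
      cases k with
      | zero => simp
      | succ k =>
        simp only [Derivation.leibniz, Derivation.leibniz_pow, smul_eq_mul, nsmul_eq_mul,
          Nat.add_sub_cancel]
        ring
    refine mem_of_pow_mul_mem_of_derivation_mem hI hl (ih hn (k := k + 1) ?_) hk
    rw [hDh]
    exact sub_mem (I.mul_mem_left _ (hI _ hk)) (nsmul_mem (I.mul_mem_left _ hk) k)

lemma derivation_eq_sum [Fintype σ] (D : Derivation R (MvPolynomial σ R) (MvPolynomial σ R))
    (f : MvPolynomial σ R) : D f = ∑ a, D (X a) * pderiv a f := by
  classical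
  induction f using MvPolynomial.induction_on with
  | C r => simp
  | add p q hp hq => simp only [map_add, mul_add, Finset.sum_add_distrib, hp, hq]
  | mul_X p i hp =>
    simp [hp, pderiv_X, Pi.single_apply, mul_add, Finset.sum_add_distrib, Finset.mul_sum,
      mul_left_comm, mul_comm p]

lemma dvd_derivation_prod_sub {ι : Type*} [DecidableEq ι] [Algebra R A] (D : Derivation R A A)
    (L : ι → A) {s : Finset ι} {i : ι} (hi : i ∈ s) :
    L i ∣ D (∏ j ∈ s, L j) - (∏ j ∈ s.erase i, L j) * D (L i) := by
  rw [← s.mul_prod_erase L hi, Derivation.leibniz, smul_eq_mul, smul_eq_mul, add_sub_cancel_right]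
  exact dvd_mul_right _ _

/-- The derivative of polynomials in the constant direction `v`. -/
noncomputable def dirDeriv (v : σ → R) :
    Derivation R (MvPolynomial σ R) (MvPolynomial σ R) :=
  mkDerivation R fun a => C (v a)

@[simp]
lemma dirDeriv_X (v : σ → R) (a : σ) : dirDeriv v (X a) = C (v a) :=
  mkDerivation_X _ _ _

@[simp]
lemma dirDeriv_linForm [Fintype σ] (v c : σ → R) : dirDeriv v (linForm c) = C (c ⬝ᵥ v) := by
  simp [linForm_apply, dotProduct, map_sum]

lemma isUnit_dirDeriv_linForm [Fintype σ] {v c : σ → K} (h : c ⬝ᵥ v ≠ 0) :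
    IsUnit (dirDeriv v (linForm c)) := by
  rw [dirDeriv_linForm]
  exact (IsUnit.mk0 _ h).map C

lemma exists_iterate_dirDeriv_eq_zero (v : σ → R) (p : MvPolynomial σ R) :
    ∃ n, (dirDeriv v)^[n] p = 0 := by
  have iterate_add_right {n : ℕ} {q : MvPolynomial σ R} (m : ℕ) (h : (dirDeriv v)^[n] q = 0) :
      (dirDeriv v)^[m + n] q = 0 := by
    rw [Function.iterate_add_apply, h, iterate_map_zero]
  induction p using MvPolynomial.induction_on with
  | C a => exact ⟨1, derivation_C _ a⟩
  | add p q hp hq =>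
    obtain ⟨m, hm⟩ := hp
    obtain ⟨n, hn⟩ := hq
    refine ⟨m + n, ?_⟩
    rw [iterate_map_add, iterate_add_right m hn, add_comm m n, iterate_add_right n hm, add_zero]
  | mul_X p i hp =>
    obtain ⟨n, hn⟩ := hp
    suffices h : (dirDeriv v)^[n + 1] (p * X i) = 0 from ⟨_, h⟩
    induction n generalizing p with
    | zero => simp_all
    | succ n ih =>
      have hC : (dirDeriv v)^[n + 1] (C (v i) * p) = C (v i) * (dirDeriv v)^[n + 1] p :=
        Function.Commute.iterate_left (fun p => by simp) _ p
      rw [Function.iterate_succ_apply, Derivation.leibniz, iterate_map_add, smul_eq_mul,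
        smul_eq_mul, mul_comm (X i), ih _ hn, dirDeriv_X, mul_comm, hC, hn, mul_zero, add_zero]

lemma mem_of_mul_mem_of_dirDeriv_mem [CharZero K] {I : Ideal (MvPolynomial σ K)} {v : σ → K}
    (hI : ∀ g ∈ I, dirDeriv v g ∈ I) {l h : MvPolynomial σ K} (hl : IsUnit (dirDeriv v l))
    (hlh : l * h ∈ I) : h ∈ I := by
  obtain ⟨n, hn⟩ := exists_iterate_dirDeriv_eq_zero v h
  exact mem_of_pow_mul_mem_of_iterate_derivation_eq_zero hI hl hn (k := 1) (by rwa [pow_one])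

lemma isSaturated_of_dirDeriv_mem [CharZero K] {I : Ideal (MvPolynomial σ K)} {v : σ → K}
    (hv : v ≠ 0) (hI : ∀ g ∈ I, dirDeriv v g ∈ I) : IsSaturated I := by
  obtain ⟨a, ha⟩ := Function.ne_iff.1 hv
  refine isSaturated_iff.2 fun h hh => mem_of_mul_mem_of_dirDeriv_mem hI ?_ (hh a)
  rw [dirDeriv_X]
  exact (IsUnit.mk0 _ ha).map C

lemma isSaturated_span_of_dirDeriv_eq_zero [CharZero K] {s : Set (MvPolynomial σ K)} {v : σ → K}
    (hv : v ≠ 0) (hs : ∀ f ∈ s, dirDeriv v f = 0) : IsSaturated (Ideal.span s) := by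
  refine isSaturated_of_dirDeriv_mem hv fun g hg => ?_
  induction hg using Submodule.span_induction with
  | mem f hf => exact hs f hf ▸ zero_mem _
  | zero => exact map_zero (dirDeriv v) ▸ zero_mem _
  | add f g _ _ hf hg => exact map_add (dirDeriv v) f g ▸ add_mem hf hg
  | smul p f hf hDf =>
    rw [smul_eq_mul, Derivation.leibniz, smul_eq_mul, smul_eq_mul]
    exact add_mem (Ideal.mul_mem_left _ _ hDf) (Ideal.mul_mem_right _ _ hf)

end Derivations

section JacobianIdeal

variable {R K : Type*} [CommRing R] [Field K] {m : ℕ}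

lemma mem_jacobianIdeal_iff {f h : MvPolynomial (Fin m) R} :
    h ∈ jacobianIdeal f ↔
      ∃ D : Derivation R (MvPolynomial (Fin m) R) (MvPolynomial (Fin m) R), D f = h := by
  rw [jacobianIdeal, Ideal.mem_span_range_iff_exists_fun]
  constructor
  · rintro ⟨c, rfl⟩
    exact ⟨mkDerivation R c, (derivation_eq_sum _ f).trans (by simp only [mkDerivation_X])⟩
  · rintro ⟨D, rfl⟩
    exact ⟨fun a => D (X a), (derivation_eq_sum D f).symm⟩

lemma derivation_mem_jacobianIdeal
    (D : Derivation R (MvPolynomial (Fin m) R) (MvPolynomial (Fin m) R))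
    (f : MvPolynomial (Fin m) R) : D f ∈ jacobianIdeal f :=
  mem_jacobianIdeal_iff.2 ⟨D, rfl⟩

lemma jacobianIdeal_eq_top {f : MvPolynomial (Fin m) R}
    {D : Derivation R (MvPolynomial (Fin m) R) (MvPolynomial (Fin m) R)} (hD : IsUnit (D f)) :
    jacobianIdeal f = ⊤ :=
  Ideal.eq_top_of_isUnit_mem _ (derivation_mem_jacobianIdeal D f) hD

lemma derivation_mem_jacobianIdeal_of_eq_zero {f g : MvPolynomial (Fin m) R}
    {E : Derivation R (MvPolynomial (Fin m) R) (MvPolynomial (Fin m) R)} (hE : E f = 0)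
    (hg : g ∈ jacobianIdeal f) : E g ∈ jacobianIdeal f := by
  obtain ⟨D, rfl⟩ := mem_jacobianIdeal_iff.1 hg
  refine mem_jacobianIdeal_iff.2 ⟨⁅E, D⁆, ?_⟩
  rw [Derivation.commutator_apply, hE, map_zero, sub_zero]

lemma isSaturated_jacobianIdeal_of_dirDeriv_eq_zero [CharZero K] {f : MvPolynomial (Fin m) K}
    {q : Fin m → K} (hq : q ≠ 0) (hf : dirDeriv q f = 0) : IsSaturated (jacobianIdeal f) :=
  isSaturated_of_dirDeriv_mem hq fun _ => derivation_mem_jacobianIdeal_of_eq_zero hf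

lemma self_mem_jacobianIdeal [CharZero K] {f : MvPolynomial (Fin m) K} {n : ℕ}
    (hf : f.IsHomogeneous n) (hn : n ≠ 0) : f ∈ jacobianIdeal f := by
  have hunit : IsUnit (C (n : K) : MvPolynomial (Fin m) K) :=
    (IsUnit.mk0 _ (Nat.cast_ne_zero.2 hn)).map C
  rw [← Ideal.unit_mul_mem_iff_mem _ hunit, map_natCast, ← nsmul_eq_mul, ← hf.sum_X_mul_pderiv]
  exact sum_mem fun a _ => Ideal.mul_mem_left _ _ (derivation_mem_jacobianIdeal _ f)

lemma sq_mul_mem_jacobianIdeal_mul {g u h : MvPolynomial (Fin m) R}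
    (hgu : g * u ∈ jacobianIdeal (g * u)) (hh : h ∈ jacobianIdeal g) :
    u ^ 2 * h ∈ jacobianIdeal (g * u) := by
  obtain ⟨D, rfl⟩ := mem_jacobianIdeal_iff.1 hh
  have hD : u ^ 2 * D g = u * D (g * u) - D u * (g * u) := by
    rw [Derivation.leibniz, smul_eq_mul, smul_eq_mul]
    ring
  rw [hD]
  exact sub_mem (Ideal.mul_mem_left _ _ (derivation_mem_jacobianIdeal D _))
    (Ideal.mul_mem_left _ _ hgu)

lemma jacobianIdeal_mul_eq_inf [CharZero K] {g z : MvPolynomial (Fin m) K} {q : Fin m → K}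
    (hz : IsUnit (dirDeriv q z)) (hqg : dirDeriv q g = 0) (hg : g ∈ jacobianIdeal g) :
    jacobianIdeal (z * g) = jacobianIdeal g ⊓ Ideal.span {g, z} := by
  have leibniz (D : Derivation K (MvPolynomial (Fin m) K) (MvPolynomial (Fin m) K)) :
      D (z * g) = z * D g + D z * g := by
    rw [Derivation.leibniz, smul_eq_mul, smul_eq_mul, mul_comm g]
  apply le_antisymm <;> intro h hh
  · obtain ⟨D, rfl⟩ := mem_jacobianIdeal_iff.1 hh
    rw [leibniz]
    exact ⟨add_mem (Ideal.mul_mem_left _ _ (derivation_mem_jacobianIdeal D g))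
      (Ideal.mul_mem_left _ _ hg), Ideal.mem_span_pair.2 ⟨D z, D g, by ring⟩⟩
  · have hg_mem : g ∈ jacobianIdeal (z * g) := by
      rw [← Ideal.unit_mul_mem_iff_mem _ hz]
      simpa [leibniz, hqg] using derivation_mem_jacobianIdeal (dirDeriv q) (z * g)
    obtain ⟨a, b, rfl⟩ := Ideal.mem_span_pair.1 hh.2
    have hzb : z * b ∈ jacobianIdeal g := by
      simpa [mul_comm b] using sub_mem hh.1 (Ideal.mul_mem_left _ a hg)
    obtain ⟨D, rfl⟩ := mem_jacobianIdeal_iff.1 (mem_of_mul_mem_of_dirDeriv_mem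
      (fun _ => derivation_mem_jacobianIdeal_of_eq_zero hqg) hz hzb)
    convert add_mem (derivation_mem_jacobianIdeal D (z * g))
      (Ideal.mul_mem_left _ (a - D z) hg_mem) using 1
    rw [leibniz]
    ring

end JacobianIdeal

section Pencils

variable {R K σ ι : Type*} [CommRing R] [Field K] [Fintype σ] {m : ℕ}

lemma dirDeriv_prod_linForm_eq_zero {c : ι → σ → R} {q : σ → R} {s : Finset ι}
    (hs : ∀ i ∈ s, c i ⬝ᵥ q = 0) : dirDeriv q (∏ i ∈ s, linForm (c i)) = 0 :=
  Finset.prod_induction _ (fun p => dirDeriv q p = 0)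
    (fun p g hp hg => by simp [Derivation.leibniz, hp, hg]) (by simp)
    fun i hi => by simp [hs i hi]

lemma isSaturated_jacobianIdeal_pencil [CharZero K] {c : ι → Fin m → K} {q : Fin m → K}
    {s : Finset ι} (hq : q ≠ 0) (hs : ∀ i ∈ s, c i ⬝ᵥ q = 0) :
    IsSaturated (jacobianIdeal (∏ i ∈ s, linForm (c i))) :=
  isSaturated_jacobianIdeal_of_dirDeriv_eq_zero hq (dirDeriv_prod_linForm_eq_zero hs)

lemma prod_linForm_mem_jacobianIdeal [CharZero K] (c : ι → Fin m → K) {s : Finset ι}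
    (hs : s.Nonempty) : ∏ i ∈ s, linForm (c i) ∈ jacobianIdeal (∏ i ∈ s, linForm (c i)) :=
  self_mem_jacobianIdeal (IsHomogeneous.prod s _ _ fun i _ => isHomogeneous_linForm (c i))
    (by simpa using hs.ne_empty)

lemma jacobianIdeal_linForm_eq_top {c : Fin m → K} (hc : c ≠ 0) :
    jacobianIdeal (linForm c) = ⊤ := by
  obtain ⟨a, ha⟩ := Function.ne_iff.1 hc
  exact jacobianIdeal_eq_top (isUnit_dirDeriv_linForm (v := Pi.single a 1) (by simpa using ha))

lemma linForm_mem_jacobianIdeal_mul {c e : Fin m → K} (h : LinearIndependent K ![c, e]) :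
    linForm e ∈ jacobianIdeal (linForm c * linForm e) := by
  obtain ⟨v, hv⟩ := exists_dotProduct_eq h ![1, 0]
  have hc : c ⬝ᵥ v = 1 := hv 0
  have he : e ⬝ᵥ v = 0 := hv 1
  simpa [Derivation.leibniz, hc, he] using
    derivation_mem_jacobianIdeal (dirDeriv v) (linForm c * linForm e)

lemma linForm_mem_jacobianIdeal_prod_pair {c : ι → Fin m → K}
    (hc : Pairwise fun i j => LinearIndependent K ![c i, c j]) {s : Finset ι} (hs : s.card = 2)
    {l : ι} (hl : l ∈ s) : linForm (c l) ∈ jacobianIdeal (∏ i ∈ s, linForm (c i)) := by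
  classical
  obtain ⟨k, hk⟩ := Finset.card_eq_one.1 (show (s.erase l).card = 1 by simp [hl, hs])
  have hkl : k ≠ l := Finset.ne_of_mem_erase (hk ▸ Finset.mem_singleton_self k)
  rw [← s.prod_erase_mul _ hl, hk, Finset.prod_singleton]
  exact linForm_mem_jacobianIdeal_mul (hc hkl)

lemma isSaturated_span_prod_linForm [CharZero K] {c : ι → Fin 3 → K} {e : Fin 3 → K}
    {s : Finset ι} (hs : ∀ i ∈ s, LinearIndependent K ![e, c i]) :
    IsSaturated (Ideal.span {∏ i ∈ s, linForm (c i), linForm e}) := by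
  induction s using Finset.cons_induction with
  | empty =>
    rw [Finset.prod_empty, Ideal.eq_top_of_isUnit_mem _ (Ideal.subset_span (by simp)) isUnit_one]
    exact isSaturated_top
  | cons i s hi ih =>
    rw [Finset.forall_mem_cons] at hs
    rw [Finset.prod_cons]
    refine IsSaturated.span_mul_pair (prime_linForm (hs.1.ne_zero 0))
      (not_linForm_dvd_linForm hs.1) ?_ (ih hs.2)
    refine isSaturated_span_of_dirDeriv_eq_zero
      (crossProduct_ne_zero_iff_linearIndependent.2 hs.1) ?_
    simp

lemma isSaturated_jacobianIdeal_nearPencil [CharZero K] {c : ι → Fin 3 → K} {e q : Fin 3 → K}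
    {s : Finset ι} (hc : ∀ i ∈ s, LinearIndependent K ![e, c i]) (hs : ∀ i ∈ s, c i ⬝ᵥ q = 0)
    (he : e ⬝ᵥ q ≠ 0) : IsSaturated (jacobianIdeal (linForm e * ∏ i ∈ s, linForm (c i))) := by
  have hq : q ≠ 0 := by
    rintro rfl
    exact he (dotProduct_zero e)
  have hunit : IsUnit (dirDeriv q (linForm e)) := isUnit_dirDeriv_linForm he
  rcases s.eq_empty_or_nonempty with rfl | hne
  · rw [Finset.prod_empty, mul_one, jacobianIdeal_eq_top hunit]
    exact isSaturated_top
  · rw [jacobianIdeal_mul_eq_inf hunit (dirDeriv_prod_linForm_eq_zero hs)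
      (prod_linForm_mem_jacobianIdeal c hne)]
    exact (isSaturated_jacobianIdeal_pencil hq hs).inf (isSaturated_span_prod_linForm hc)

lemma constantCoeff_derivation_linForm
    (E : Derivation R (MvPolynomial σ R) (MvPolynomial σ R)) (c : σ → R) :
    constantCoeff (E (linForm c)) = c ⬝ᵥ fun a => constantCoeff (E (X a)) := by
  simp [linForm_apply, dotProduct, map_sum, derivation_C]

lemma constantCoeff_derivation_linForm_eq [Fintype ι] [DecidableEq ι] {c : ι → σ → K}
    (hc : Pairwise fun i j => LinearIndependent K ![c i, c j]) {i : ι} (hi : c i ≠ 0)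
    (E : Derivation K (MvPolynomial σ K) (MvPolynomial σ K))
    {t : MvPolynomial σ K}
    (h : linForm (c i) ∣ E (∏ j, linForm (c j)) - (∏ j ∈ Finset.univ.erase i, linForm (c j)) * t) :
    constantCoeff (E (linForm (c i))) = constantCoeff t := by
  have hdvd := dvd_sub h (dvd_derivation_prod_sub E (linForm <| c ·) (Finset.mem_univ i))
  rw [sub_sub_sub_cancel_left, ← mul_sub] at hdvd
  have hprime := prime_linForm hi
  obtain ⟨b, hb⟩ := (hprime.dvd_or_dvd hdvd).resolve_left fun hprod => by
    obtain ⟨j, hj, hij⟩ := (hprime.dvd_finsetProd_iff _).1 hprod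
    exact not_linForm_dvd_linForm (hc (Finset.ne_of_mem_erase hj).symm) hij
  have hzero : constantCoeff (linForm (c i)) = 0 := by simp [linForm_apply]
  rw [← sub_eq_zero, ← map_sub, hb, map_mul, hzero, zero_mul]

end Pencils

section CrossProduct

variable {K : Type*} [Field K]

lemma span_pair_eq_of_mem {W : Submodule K (Fin 3 → K)} (hW : W ≠ ⊤) {c e : Fin 3 → K}
    (h : LinearIndependent K ![c, e]) (hc : c ∈ W) (he : e ∈ W) :
    Submodule.span K (Set.range ![c, e]) = W := by
  have hle : Submodule.span K (Set.range ![c, e]) ≤ W := by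
    simp [Submodule.span_le, Set.pair_subset_iff, hc, he]
  refine Submodule.eq_of_le_of_finrank_le hle ?_
  rw [finrank_span_eq_card h]
  simpa [Nat.lt_succ_iff] using Submodule.finrank_lt hW

lemma ker_dotProduct_ne_top {σ : Type*} [Fintype σ] {v : σ → K} (hv : v ≠ 0) :
    LinearMap.ker (dotProductBilin K K v) ≠ ⊤ := by
  rw [ne_eq, LinearMap.ker_eq_top, LinearMap.ext_iff]
  exact fun h => hv (dotProduct_eq_zero_iff.1 h)

lemma mem_iff_dotProduct_cross_eq_zero {W : Submodule K (Fin 3 → K)} (hW : W ≠ ⊤)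
    {c e : Fin 3 → K} (h : LinearIndependent K ![c, e]) (hc : c ∈ W) (he : e ∈ W)
    {b : Fin 3 → K} : b ∈ W ↔ b ⬝ᵥ c ⨯₃ e = 0 := by
  have hker : LinearMap.ker (dotProductBilin K K (c ⨯₃ e)) = W := by
    rw [← span_pair_eq_of_mem hW h hc he]
    refine (span_pair_eq_of_mem (ker_dotProduct_ne_top
      (crossProduct_ne_zero_iff_linearIndependent.2 h)) h ?_ ?_).symm <;>
    simp [dotProduct_comm (c ⨯₃ e)]
  rw [← hker, LinearMap.mem_ker, dotProductBilin_apply_apply, dotProduct_comm]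

lemma mem_span_cross_of_dotProduct_eq_zero {c e v : Fin 3 → K} (h : LinearIndependent K ![c, e])
    (hc : c ⬝ᵥ v = 0) (he : e ⬝ᵥ v = 0) : v ∈ Submodule.span K {c ⨯₃ e} := by
  have hcross : c ⨯₃ e ≠ 0 := crossProduct_ne_zero_iff_linearIndependent.2 h
  have hv : (c ⨯₃ e) ⨯₃ v = 0 := by
    rw [cross_cross_eq_smul_sub_smul, hc, he]
    simp
  have hdep : ¬ LinearIndependent K ![c ⨯₃ e, v] := by
    rwa [← crossProduct_ne_zero_iff_linearIndependent, not_not]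
  rw [LinearIndependent.pair_iff' hcross] at hdep
  push Not at hdep
  exact Submodule.mem_span_singleton.2 hdep

lemma span_pair_ne_top (r s : Fin 3 → K) : Submodule.span K {r, s} ≠ ⊤ := by
  intro htop
  have hfin := finrank_range_le_card (R := K) ![r, s]
  rw [Set.finrank, Matrix.range_cons_cons_empty, htop, finrank_top, Module.finrank_fin_fun] at hfin
  simp at hfin

end CrossProduct

section LocalAnalysis

open Classical in
/-- The lines of the arrangement with coefficient vectors `c` that pass through `q`. -/
noncomputable def linesThrough {R ι : Type*} [CommRing R] [Fintype ι]
    (c : ι → Fin 3 → R) (q : Fin 3 → R) : Finset ι :=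
  {i | c i ⬝ᵥ q = 0}

open Classical in
/-- The lines of the arrangement with coefficient vectors `c` whose forms lie in the ideal `I`:
for a prime `I` these are the lines that remain visible in the localization at `I`. -/
noncomputable def formsIn {R σ ι : Type*} [CommRing R] [Fintype σ] [Fintype ι]
    (c : ι → σ → R) (I : Ideal (MvPolynomial σ R)) : Finset ι :=
  {i | linForm (c i) ∈ I}

/-- The pencil through `q` is isolated: the only pencil of at least three lines containing one of
the lines through `q` is that pencil itself. -/
def IsIsolatedPencil {R ι : Type*} [CommRing R] [Fintype ι]
    (c : ι → Fin 3 → R) (q : Fin 3 → R) : Prop :=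
  ∀ r ≠ 0, 3 ≤ (linesThrough c r).card → ¬ Disjoint (linesThrough c q) (linesThrough c r) →
    linesThrough c r = linesThrough c q

variable {K ι : Type*} [Field K] [Fintype ι] {m : ℕ}

lemma mem_linesThrough {c : ι → Fin 3 → K} {q : Fin 3 → K} {i : ι} :
    i ∈ linesThrough c q ↔ c i ⬝ᵥ q = 0 := by
  simp [linesThrough]

lemma mem_formsIn {c : ι → Fin m → K} {I : Ideal (MvPolynomial (Fin m) K)} {i : ι} :
    i ∈ formsIn c I ↔ linForm (c i) ∈ I := by
  simp [formsIn]

lemma mem_jacobianIdeal_prod_of_forall_formsIn [CharZero K] [Nonempty ι] {c : ι → Fin m → K}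
    (hsat : IsSaturated (jacobianIdeal (∏ i, linForm (c i)))) {h : MvPolynomial (Fin m) K}
    (hloc : ∀ p : Ideal (MvPolynomial (Fin m) K), (∃ a, X a ∉ p) → (formsIn c p).Nonempty →
      h ∈ jacobianIdeal (∏ i ∈ formsIn c p, linForm (c i))) :
    h ∈ jacobianIdeal (∏ i, linForm (c i)) := by
  classical
  refine hsat.mem_of_forall_isPrime fun p hp hle => ?_
  by_contra! hX
  have euler := prod_linForm_mem_jacobianIdeal c Finset.univ_nonempty
  obtain ⟨i, -, hi⟩ := hp.prod_mem_iff.1 (hle (Ideal.le_colon euler))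
  rw [← (formsIn c p).prod_mul_prod_compl] at euler hle
  have hu := sq_mul_mem_jacobianIdeal_mul euler (hloc p hX ⟨i, mem_formsIn.2 hi⟩)
  obtain ⟨j, hj, hjp⟩ := hp.prod_mem_iff.1
    (hp.mem_of_pow_mem 2 (hle (Submodule.mem_colon_singleton.2 hu)))
  exact Finset.mem_compl.1 hj (mem_formsIn.2 hjp)

lemma linForm_mem_iff_dotProduct_cross_eq_zero {I : Ideal (MvPolynomial (Fin 3) K)}
    (hX : ∃ a, X a ∉ I) {c e b : Fin 3 → K} (h : LinearIndependent K ![c, e]) (hc : linForm c ∈ I)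
    (he : linForm e ∈ I) : linForm b ∈ I ↔ b ⬝ᵥ c ⨯₃ e = 0 := by
  let W : Submodule K (Fin 3 → K) := (I.restrictScalars K).comap linForm
  have hW : W ≠ ⊤ := by
    obtain ⟨a, ha⟩ := hX
    intro htop
    have : Pi.single a 1 ∈ W := htop ▸ Submodule.mem_top
    exact ha (by simpa [W, linForm] using this)
  exact mem_iff_dotProduct_cross_eq_zero hW h hc he

lemma formsIn_eq_linesThrough {c : ι → Fin 3 → K} {I : Ideal (MvPolynomial (Fin 3) K)}
    (hX : ∃ a, X a ∉ I) {k l : ι} (h : LinearIndependent K ![c k, c l]) (hk : k ∈ formsIn c I)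
    (hl : l ∈ formsIn c I) : formsIn c I = linesThrough c (c k ⨯₃ c l) := by
  ext i
  rw [mem_linesThrough, mem_formsIn]
  exact linForm_mem_iff_dotProduct_cross_eq_zero hX h (mem_formsIn.1 hk) (mem_formsIn.1 hl)

lemma linesThrough_eq_linesThrough_cross {c : ι → Fin 3 → K} {q : Fin 3 → K} (hq : q ≠ 0)
    {k l : ι} (h : LinearIndependent K ![c k, c l]) (hk : k ∈ linesThrough c q)
    (hl : l ∈ linesThrough c q) : linesThrough c q = linesThrough c (c k ⨯₃ c l) := by
  rw [mem_linesThrough, dotProduct_comm] at hk hl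
  ext i
  rw [mem_linesThrough, mem_linesThrough,
    ← mem_iff_dotProduct_cross_eq_zero (ker_dotProduct_ne_top hq) h hk hl, dotProduct_comm]
  rfl

lemma compl_prod_mul_derivation_mem_jacobianIdeal_formsIn [CharZero K] [DecidableEq ι]
    {c : ι → Fin 3 → K} {q : Fin 3 → K}
    (hc : Pairwise fun i j => LinearIndependent K ![c i, c j]) (hc0 : ∀ i, c i ≠ 0) (hq : q ≠ 0)
    (hiso : IsIsolatedPencil c q)
    (D : Derivation K (MvPolynomial (Fin 3) K) (MvPolynomial (Fin 3) K))
    {p : Ideal (MvPolynomial (Fin 3) K)} (hX : ∃ a, X a ∉ p) (hp : (formsIn c p).Nonempty) :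
    (∏ i ∈ (linesThrough c q)ᶜ, linForm (c i)) * D (∏ i ∈ linesThrough c q, linForm (c i)) ∈
      jacobianIdeal (∏ i ∈ formsIn c p, linForm (c i)) := by
  obtain hone | htwo : (formsIn c p).card = 1 ∨ 1 < (formsIn c p).card := by
    have := hp.card_pos
    omega
  · obtain ⟨i, hi⟩ := Finset.card_eq_one.1 hone
    rw [hi, Finset.prod_singleton, jacobianIdeal_linForm_eq_top (hc0 i)]
    exact Submodule.mem_top
  obtain ⟨k, hk, l, hl, hkl⟩ := Finset.one_lt_card.1 htwo
  have hT := formsIn_eq_linesThrough hX (hc hkl) hk hl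
  by_cases hsub : formsIn c p ⊆ linesThrough c q
  · rw [hT, ← linesThrough_eq_linesThrough_cross hq (hc hkl) (hsub hk) (hsub hl)]
    exact Ideal.mul_mem_left _ _ (derivation_mem_jacobianIdeal D _)
  obtain ⟨n, hnp, hnq⟩ := Finset.not_subset.1 hsub
  apply Ideal.mul_mem_right
  by_cases hdisj : Disjoint (linesThrough c q) (formsIn c p)
  · exact Ideal.mem_of_dvd _
      (Finset.prod_dvd_prod_of_subset _ _ _ (Finset.subset_compl_iff_disjoint_left.2 hdisj))
      (prod_linForm_mem_jacobianIdeal c hp)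
  have hcard : (formsIn c p).card = 2 := by
    by_contra hne
    have hr : c k ⨯₃ c l ≠ 0 := crossProduct_ne_zero_iff_linearIndependent.2 (hc hkl)
    rw [hT] at htwo hne hdisj hnp
    exact hnq (hiso _ hr (by omega) hdisj ▸ hnp)
  exact Ideal.mem_of_dvd _ (Finset.dvd_prod_of_mem _ (Finset.mem_compl.2 hnq))
    (linForm_mem_jacobianIdeal_prod_pair hc hcard hnp)

lemma exists_dotProduct_eq_of_isSaturated [CharZero K] [Nonempty ι] {c : ι → Fin 3 → K}
    {q : Fin 3 → K}
    (hc : Pairwise fun i j => LinearIndependent K ![c i, c j]) (hc0 : ∀ i, c i ≠ 0) (hq : q ≠ 0)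
    (hiso : IsIsolatedPencil c q) (hsat : IsSaturated (jacobianIdeal (∏ i, linForm (c i))))
    (a : Fin 3 → K) :
    ∃ v, (∀ i ∈ linesThrough c q, c i ⬝ᵥ v = c i ⬝ᵥ a) ∧ ∀ i ∉ linesThrough c q, c i ⬝ᵥ v = 0 := by
  classical
  obtain ⟨E, hE⟩ := mem_jacobianIdeal_iff.1 <|
    mem_jacobianIdeal_prod_of_forall_formsIn hsat fun p =>
      compl_prod_mul_derivation_mem_jacobianIdeal_formsIn hc hc0 hq hiso (dirDeriv a)
  refine ⟨fun k => constantCoeff (E (X k)), fun i hi => ?_, fun i hi => ?_⟩ <;>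
    rw [← constantCoeff_derivation_linForm]
  · rw [constantCoeff_derivation_linForm_eq hc (hc0 i) E (t := dirDeriv a (linForm (c i)))]
    · simp
    rw [hE]
    have hdvd := dvd_derivation_prod_sub (dirDeriv a) (linForm <| c ·) (Finset.mem_univ i)
    rw [← (linesThrough c q).prod_mul_prod_compl, Derivation.leibniz, smul_eq_mul, smul_eq_mul,
      add_sub_assoc] at hdvd
    exact (dvd_add_right ((Finset.dvd_prod_of_mem _ hi).mul_right _)).1 hdvd
  · rw [constantCoeff_derivation_linForm_eq hc (hc0 i) E (t := 0), map_zero]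
    rw [hE, mul_zero, sub_zero]
    exact (Finset.dvd_prod_of_mem _ (Finset.mem_compl.2 hi)).mul_right _

lemma card_compl_linesThrough_le_one [CharZero K] [DecidableEq ι] {c : ι → Fin 3 → K}
    {q : Fin 3 → K}
    (hc : Pairwise fun i j => LinearIndependent K ![c i, c j]) (hq : q ≠ 0)
    (hcard : 1 < (linesThrough c q).card)
    (hiso : IsIsolatedPencil c q) (hsat : IsSaturated (jacobianIdeal (∏ i, linForm (c i)))) :
    (linesThrough c q)ᶜ.card ≤ 1 := by
  by_contra! hcompl
  obtain ⟨k, hk, l, hl, hkl⟩ := Finset.one_lt_card.1 hcard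
  obtain ⟨i, hi, j, hj, hij⟩ := Finset.one_lt_card.1 hcompl
  rw [Finset.mem_compl] at hi hj
  have : Nontrivial ι := ⟨k, l, hkl⟩
  have hc0 (n : ι) : c n ≠ 0 := by
    obtain ⟨n', hn'⟩ := exists_ne n
    exact (hc hn'.symm).ne_zero 0
  have htop (a : Fin 3 → K) : a ∈ Submodule.span K {c i ⨯₃ c j, c k ⨯₃ c l} := by
    obtain ⟨v, hv, hv0⟩ := exists_dotProduct_eq_of_isSaturated hc hc0 hq hiso hsat a
    have hdiff (n : ι) (hn : n ∈ linesThrough c q) : c n ⬝ᵥ (a - v) = 0 := by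
      rw [dotProduct_sub, hv n hn, sub_self]
    rw [Submodule.span_insert, ← add_sub_cancel v a]
    exact Submodule.add_mem_sup
      (mem_span_cross_of_dotProduct_eq_zero (hc hij) (hv0 i hi) (hv0 j hj))
      (mem_span_cross_of_dotProduct_eq_zero (hc hkl) (hdiff k hk) (hdiff l hl))
  exact span_pair_ne_top _ _ (Submodule.eq_top_iff'.2 htop)

end LocalAnalysis

section Arrangements

variable {K ι : Type*} [Field K]

theorem isSaturated_jacobianIdeal_prod_iff [CharZero K] [Fintype ι] {c : ι → Fin 3 → K}
    (hc : Pairwise fun i j => LinearIndependent K ![c i, c j])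
    (hiso : 2 ≤ Fintype.card ι →
      ∃ q ≠ 0, 2 ≤ (linesThrough c q).card ∧ IsIsolatedPencil c q) :
    IsSaturated (jacobianIdeal (∏ i, linForm (c i))) ↔
      ∃ q ≠ 0, Fintype.card ι ≤ (linesThrough c q).card + 1 := by
  classical
  constructor
  · intro hsat
    rcases lt_or_ge (Fintype.card ι) 2 with hlt | hge
    · exact ⟨1, one_ne_zero, by omega⟩
    · obtain ⟨q, hq, htwo, hq_iso⟩ := hiso hge
      have hcompl := card_compl_linesThrough_le_one hc hq htwo hq_iso hsat
      exact ⟨q, hq, by rw [← (linesThrough c q).card_add_card_compl]; omega⟩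
  · rintro ⟨q, hq, hcard⟩
    have hthrough (i : ι) (hi : i ∈ linesThrough c q) : c i ⬝ᵥ q = 0 := mem_linesThrough.1 hi
    rw [← (linesThrough c q).card_add_card_compl, add_le_add_iff_left,
      Nat.le_one_iff_eq_zero_or_eq_one, Finset.card_eq_zero, Finset.card_eq_one] at hcard
    rw [← (linesThrough c q).prod_compl_mul_prod]
    obtain hcompl | ⟨i, hcompl⟩ := hcard <;> rw [hcompl]
    · rw [Finset.prod_empty, one_mul]
      exact isSaturated_jacobianIdeal_pencil hq hthrough
    · have hi : i ∉ linesThrough c q := by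
        rw [← Finset.mem_compl, hcompl, Finset.mem_singleton]
      rw [Finset.prod_singleton]
      exact isSaturated_jacobianIdeal_nearPencil (fun j hj => hc (ne_of_mem_of_not_mem hj hi).symm)
        hthrough (mt mem_linesThrough.2 hi)

lemma linesThrough_eq_formsIn_span [Fintype ι] {c : ι → Fin 3 → K} {q : Fin 3 → K} (hq : q ≠ 0)
    {k l : ι} (h : LinearIndependent K ![c k, c l]) (hk : k ∈ linesThrough c q)
    (hl : l ∈ linesThrough c q) :
    linesThrough c q = formsIn c (Ideal.span {linForm (c k), linForm (c l)}) := by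
  have hX : ∃ a, X a ∉ Ideal.span {linForm (c k), linForm (c l)} := by
    obtain ⟨a, ha⟩ := Function.ne_iff.1 hq
    refine ⟨a, fun hmem => ha ?_⟩
    have hle : Ideal.span {linForm (c k), linForm (c l)} ≤ RingHom.ker (eval q) := by
      simp [Ideal.span_le, Set.pair_subset_iff, eval_linForm, mem_linesThrough.1 hk,
        mem_linesThrough.1 hl]
    simpa using hle hmem
  rw [linesThrough_eq_linesThrough_cross hq h hk hl,
    formsIn_eq_linesThrough hX h (mem_formsIn.2 (Ideal.subset_span (by simp)))
      (mem_formsIn.2 (Ideal.subset_span (by simp)))]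

lemma exists_isIsolatedPencil {d : ℕ} {c : Fin d → Fin 3 → K}
    (hc : Pairwise fun i j => LinearIndependent K ![c i, c j])
    {P : Ideal (MvPolynomial (Fin 3) K)} (hP : P ∈ singSupp (linForm <| c ·))
    (hiso : ∀ Q ∈ singSupp (linForm <| c ·), 3 ≤ tOf (linForm <| c ·) Q →
      ∀ i, linForm (c i) ∈ P → linForm (c i) ∈ Q → Q = P) :
    ∃ q ≠ 0, 2 ≤ (linesThrough c q).card ∧ IsIsolatedPencil c q := by
  obtain ⟨k, l, hkl, rfl⟩ := hP
  have hq : c k ⨯₃ c l ≠ 0 := crossProduct_ne_zero_iff_linearIndependent.2 (hc hkl)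
  have hk : k ∈ linesThrough c (c k ⨯₃ c l) := by simp [mem_linesThrough]
  have hl : l ∈ linesThrough c (c k ⨯₃ c l) := by simp [mem_linesThrough]
  have hP := linesThrough_eq_formsIn_span hq (hc hkl) hk hl
  refine ⟨_, hq, Finset.one_lt_card.2 ⟨k, hk, l, hl, hkl⟩, fun r hr hthree hdisj => ?_⟩
  obtain ⟨i, hi, hir⟩ := Finset.not_disjoint_iff.1 hdisj
  obtain ⟨m, hm, n, hn, hmn⟩ := Finset.one_lt_card.1 (by omega : 1 < (linesThrough c r).card)
  have hQ := linesThrough_eq_formsIn_span hr (hc hmn) hm hn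
  rw [hQ] at hthree hir
  rw [hP] at hi
  rw [hP, hQ, hiso _ ⟨m, n, hmn, rfl⟩ hthree i (mem_formsIn.1 hi) (mem_formsIn.1 hir)]

lemma exists_isolated_mem_singSupp {R : Type*} [CommRing R] {m d : ℕ}
    {L : Fin d → MvPolynomial (Fin m) R}
    (hdisc : ∀ i : Fin d, {P : Ideal (MvPolynomial (Fin m) R) |
      P ∈ singSupp L ∧ 3 ≤ tOf L P ∧ L i ∈ P}.Subsingleton) (hd : 2 ≤ d) :
    ∃ P ∈ singSupp L, ∀ Q ∈ singSupp L, 3 ≤ tOf L Q → ∀ i, L i ∈ P → L i ∈ Q → Q = P := by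
  by_cases hex : ∃ P ∈ singSupp L, 3 ≤ tOf L P
  · obtain ⟨P, hP, hP3⟩ := hex
    exact ⟨P, hP, fun Q hQ hQ3 i hiP hiQ => hdisc i ⟨hQ, hQ3, hiQ⟩ ⟨hP, hP3, hiP⟩⟩
  · exact ⟨_, ⟨⟨0, by omega⟩, ⟨1, by omega⟩, by simp, rfl⟩,
      fun Q hQ hQ3 => absurd ⟨Q, hQ, hQ3⟩ hex⟩

open Classical in
lemma exists_card_le_card_linesThrough_add_one_iff {d : ℕ} {c : Fin d → Fin 3 → K} :
    (∃ q ≠ 0, d ≤ (linesThrough c q).card + 1) ↔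
      ((∃ q : Fin 3 → K, q ≠ 0 ∧ ∀ i, eval q (linForm (c i)) = 0) ∨
        (∃ q : Fin 3 → K, q ≠ 0 ∧
          (Finset.univ.filter (fun i => eval q (linForm (c i)) = 0)).card = d - 1)) := by
  simp only [eval_linForm, ← exists_or, ← and_or_left]
  refine exists_congr fun q => and_congr_right fun _ => ?_
  have hall : (∀ i, c i ⬝ᵥ q = 0) ↔ (linesThrough c q).card = d := by
    simpa [Finset.eq_univ_iff_forall, mem_linesThrough] using
      (Finset.card_eq_iff_eq_univ (linesThrough c q)).symm
  have hle : (linesThrough c q).card ≤ d := by simpa using (linesThrough c q).card_le_univ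
  rw [hall]
  change _ ↔ _ ∨ (linesThrough c q).card = d - 1
  omega

end Arrangements

open Classical in
theorem stmt_18_general {K : Type*} [Field K] [CharZero K] {d : ℕ}
    (L : Fin d → MvPolynomial (Fin 3) K)
    (hhom : ∀ i, (L i).IsHomogeneous 1)
    (hprop : ∀ i j, i ≠ j → ∀ c : K, L i ≠ c • L j)
    (hiso : 2 ≤ d → ∃ P ∈ singSupp L, ∀ Q ∈ singSupp L, 3 ≤ tOf L Q →
      ∀ i, L i ∈ P → L i ∈ Q → Q = P) :
    ((jacobianIdeal (∏ i, L i)).colon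
        (Ideal.span (Set.range X) : Ideal (MvPolynomial (Fin 3) K)) =
      jacobianIdeal (∏ i, L i)) ↔
    ((∃ q : Fin 3 → K, q ≠ 0 ∧ ∀ i, eval q (L i) = 0) ∨
      (∃ q : Fin 3 → K, q ≠ 0 ∧
        (Finset.univ.filter (fun i => eval q (L i) = 0)).card = d - 1)) := by
  choose c hcL using fun i => exists_linForm_eq (hhom i)
  obtain rfl : (linForm <| c ·) = L := funext hcL
  have hc : Pairwise fun i j => LinearIndependent K ![c i, c j] := by
    intro i j hij
    have hi : c i ≠ 0 := fun h => hprop i j hij 0 (by simp [h])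
    refine (LinearIndependent.pair_iff' hi).2 fun a ha => hprop j i hij.symm a ?_
    change linForm (c j) = a • linForm (c i)
    rw [← ha, map_smul]
  rw [← exists_card_le_card_linesThrough_add_one_iff, ← IsSaturated,
    isSaturated_jacobianIdeal_prod_iff hc, Fintype.card_fin]
  intro hd
  obtain ⟨P, hP, hPiso⟩ := hiso (by simpa using hd)
  exact exists_isIsolatedPencil hc hP hPiso

open Classical in
/-- Let `K` have characteristic zero and let `A` be an arrangement of
`d` distinct lines in `ℙ²` (given by pairwise non-proportional linear forms `L i` in
`K[x₀,x₁,x₂]`, with `f_A = Π L i`) which is a union of disconnected pencils: no line of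
`A` contains two or more points of `S₀(A) = {P ∈ S(A) : t_P ≥ 3}`.  Then `A` is free —
i.e. `Jac(f_A)` is saturated — iff either (a) all `d` lines of `A` are concurrent (pass
through a common point `q`), or (b) exactly `d − 1` of the lines of `A` pass through a
common point `q` and the remaining line does not contain `q`. -/
theorem stmt_18 {K : Type*} [Field K] [CharZero K] {d : ℕ}
    (L : Fin d → MvPolynomial (Fin 3) K)
    (hhom : ∀ i, (L i).IsHomogeneous 1) (hne : ∀ i, L i ≠ 0)
    (hprop : ∀ i j, i ≠ j → ∀ c : K, L i ≠ c • L j)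
    (hdisc : ∀ i : Fin d,
      {P : Ideal (MvPolynomial (Fin 3) K) |
        P ∈ singSupp L ∧ 3 ≤ tOf L P ∧ L i ∈ P}.Subsingleton) :
    ((jacobianIdeal (∏ i, L i)).colon
        (Ideal.span (Set.range X) : Ideal (MvPolynomial (Fin 3) K)) =
      jacobianIdeal (∏ i, L i)) ↔
    ((∃ q : Fin 3 → K, q ≠ 0 ∧ ∀ i, eval q (L i) = 0) ∨
      (∃ q : Fin 3 → K, q ≠ 0 ∧
        (Finset.univ.filter (fun i => eval q (L i) = 0)).card = d - 1)) :=
  stmt_18_general L hhom hprop (exists_isolated_mem_singSupp hdisc)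
end

section
/- Let K have characteristic zero, n ≥ 2, and S = K[x₀,…,xₙ]. Let ℓ₁, ℓ₂ ∈ S be linearly independent linear forms with xₙ ∉ span_K{ℓ₁, ℓ₂} (i.e., the codimension-two subspace Λ = V(ℓ₁,ℓ₂) is not contained in the hyperplane V(xₙ)). Let g ∈ S be a homogeneous polynomial lying in the K-subalgebra K[ℓ₁,ℓ₂] generated by ℓ₁ and ℓ₂, and let π : S → K[x₀,…,x_{n−1}] be the K-algebra map substituting xₙ ↦ 0 and xᵢ ↦ xᵢ for i < n. Then the ideal of K[x₀,…,x_{n−1}] generated by π(∂g/∂x₀), …, π(∂g/∂xₙ) equals the Jacobian ideal of π(g), i.e. the ideal generated by ∂(π(g))/∂x₀, …, ∂(π(g))/∂x_{n−1}. In other words, the restriction of the Jacobian ideal of g equals the Jacobian ideal of the restriction of g. -/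
open MvPolynomial

/-- The restriction homomorphism `π : K[x₀,…,xₙ] → K[x₀,…,x_{n−1}]` substituting
`xₙ ↦ 0` and `xᵢ ↦ xᵢ` for `i < n`. -/
noncomputable def restrictLast (K : Type*) [CommSemiring K] (n : ℕ) :
    MvPolynomial (Fin (n + 1)) K →ₐ[K] MvPolynomial (Fin n) K :=
  aeval (Fin.lastCases 0 X : Fin (n + 1) → MvPolynomial (Fin n) K)

/-!
Since `xₙ` is not in the span of the linear forms `ℓ`, a linear functional on `S` kills every `ℓ`
and is `1` at `xₙ`. Its values `v` on the variables are the coordinates of a point where all the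
forms vanish and `vₙ = 1`. The directional derivative `∑ vᵢ ∂/∂xᵢ` kills the forms, hence everything
in the subalgebra they generate, so `∂g/∂xₙ` is a `K`-linear combination of the other partial
derivatives of `g`. The latter commute with setting `xₙ = 0`.
-/

theorem derivation_aeval {R A M σ : Type*} [CommSemiring R] [CommSemiring A] [Algebra R A]
    [AddCommMonoid M] [Module A M] [Module R M] [Fintype σ] (D : Derivation R A M) (f : σ → A)
    (p : MvPolynomial σ R) :
    D (aeval f p) = ∑ j, aeval f (pderiv j p) • D (f j) := by
  classical
  induction p using MvPolynomial.induction_on with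
  | C a => simp
  | add p q hp hq => simp only [map_add, hp, hq, add_smul, Finset.sum_add_distrib]
  | mul_X p k hp =>
    simp only [map_mul, aeval_X, Derivation.leibniz, hp, pderiv_X, smul_eq_mul, map_add, add_smul,
      mul_smul, Finset.sum_add_distrib, Finset.smul_sum]
    simp [Pi.single_apply, apply_ite (aeval f)]

theorem derivation_eq_sum_pderiv {R M σ : Type*} [CommSemiring R] [AddCommMonoid M]
    [Module (MvPolynomial σ R) M] [Module R M] [Fintype σ] (D : Derivation R (MvPolynomial σ R) M)
    (p : MvPolynomial σ R) : D p = ∑ j, pderiv j p • D (X j) := by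
  simpa only [aeval_X_left_apply] using derivation_aeval D X p

theorem pderiv_restrictLast {K : Type*} [CommSemiring K] {n : ℕ} (i : Fin n)
    (p : MvPolynomial (Fin (n + 1)) K) :
    pderiv i (restrictLast K n p) = restrictLast K n (pderiv i.castSucc p) := by
  rw [restrictLast, derivation_aeval, Fin.sum_univ_castSucc]
  simp [Pi.single_apply]

theorem mkDerivation_C_eq_C_of_isHomogeneous_one {R σ : Type*} [CommSemiring R]
    (φ : MvPolynomial σ R →ₗ[R] R) {ℓ : MvPolynomial σ R} (hℓ : ℓ.IsHomogeneous 1) :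
    mkDerivation R (fun i => C (φ (X i))) ℓ = (C (φ ℓ) : MvPolynomial σ R) := by
  rw [← mem_homogeneousSubmodule, homogeneousSubmodule_one_eq_span_X] at hℓ
  induction hℓ using Submodule.span_induction with
  | mem _ hx => obtain ⟨i, rfl⟩ := hx; exact mkDerivation_X R _ i
  | zero => simp only [map_zero]
  | add p q _ _ hp hq => simp only [map_add, hp, hq]
  | smul a p _ hp => rw [Derivation.map_smul, hp, map_smul, smul_eq_mul, C_mul, smul_eq_C_mul]

section LinearForms

variable {K σ : Type*} [Field K] {s : Set (MvPolynomial σ K)} {j : σ}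

theorem exists_mkDerivation_C_eq_zero_on_adjoin (hs : ∀ ℓ ∈ s, ℓ.IsHomogeneous 1)
    (hj : X j ∉ Submodule.span K s) :
    ∃ v : σ → K, v j = 1 ∧ ∀ g ∈ Algebra.adjoin K s,
      mkDerivation K (fun i => (C (v i) : MvPolynomial σ K)) g = 0 := by
  obtain ⟨φ, hφs, hφj⟩ := LinearMap.exists_extend_of_notMem (0 : Submodule.span K s →ₗ[K] K) hj 1
  refine ⟨fun i => φ (X i), hφj, fun g hg => ?_⟩
  refine Derivation.eqOn_adjoin (D2 := 0) (fun ℓ hℓ => ?_) hg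
  have hφℓ : φ ℓ = 0 := LinearMap.congr_fun hφs ⟨ℓ, Submodule.subset_span hℓ⟩
  rw [mkDerivation_C_eq_C_of_isHomogeneous_one φ (hs ℓ hℓ), hφℓ, C_0, Derivation.zero_apply]

theorem pderiv_mem_span_pderiv_compl [Finite σ] (hs : ∀ ℓ ∈ s, ℓ.IsHomogeneous 1)
    (hj : X j ∉ Submodule.span K s) {g : MvPolynomial σ K} (hg : g ∈ Algebra.adjoin K s) :
    pderiv j g ∈ Submodule.span K ((fun i => pderiv i g) '' {j}ᶜ) := by
  classical
  cases nonempty_fintype σ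
  obtain ⟨v, hvj, hv⟩ := exists_mkDerivation_C_eq_zero_on_adjoin hs hj
  have hsum : ∑ i, v i • pderiv i g = 0 := by
    rw [← hv g hg, derivation_eq_sum_pderiv]
    simp only [mkDerivation_X, smul_eq_mul, smul_eq_C_mul, mul_comm]
  rw [Fintype.sum_eq_add_sum_compl j, hvj, one_smul, add_eq_zero_iff_eq_neg] at hsum
  rw [hsum]
  exact neg_mem <| sum_mem fun i hi =>
    Submodule.smul_mem _ _ <| Submodule.subset_span ⟨i, by simpa using hi, rfl⟩

end LinearForms

theorem stmt_19_general {K : Type*} [Field K] {n : ℕ} {s : Set (MvPolynomial (Fin (n + 1)) K)}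
    (hs : ∀ ℓ ∈ s, ℓ.IsHomogeneous 1) (hlast : X (Fin.last n) ∉ Submodule.span K s)
    {g : MvPolynomial (Fin (n + 1)) K} (hg : g ∈ Algebra.adjoin K s) :
    Ideal.span (Set.range fun i : Fin (n + 1) => restrictLast K n (pderiv i g)) =
      Ideal.span (Set.range fun i : Fin n => pderiv i (restrictLast K n g)) := by
  simp only [pderiv_restrictLast]
  set J := Ideal.span (Set.range fun i : Fin n => restrictLast K n (pderiv i.castSucc g))
  have hcast (i : Fin n) : restrictLast K n (pderiv i.castSucc g) ∈ J :=
    Ideal.subset_span ⟨i, rfl⟩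
  have hspan : Submodule.span K ((fun i => pderiv i g) '' {Fin.last n}ᶜ) ≤
      (J.restrictScalars K).comap (restrictLast K n).toLinearMap := by
    rw [Submodule.span_le]
    rintro _ ⟨i, hi, rfl⟩
    obtain ⟨i, rfl⟩ := Fin.exists_castSucc_eq.2 hi
    exact hcast i
  apply le_antisymm
  · rw [Ideal.span_le]
    rintro _ ⟨i, rfl⟩
    cases i using Fin.lastCases with
    | last => exact hspan (pderiv_mem_span_pderiv_compl hs hlast hg)
    | cast i => exact hcast i
  · exact Ideal.span_mono (Set.range_subset_iff.2 fun i => ⟨i.castSucc, rfl⟩)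

/-- Let `K` have characteristic zero, `n ≥ 2`, and
`S = K[x₀,…,xₙ]`.  Let `ℓ₁, ℓ₂ ∈ S` be linearly independent linear forms with
`xₙ ∉ span_K{ℓ₁, ℓ₂}`.  Let `g ∈ S` be a homogeneous polynomial lying in the
`K`-subalgebra `K[ℓ₁,ℓ₂]` generated by `ℓ₁` and `ℓ₂`, and let
`π : S → K[x₀,…,x_{n−1}]` substitute `xₙ ↦ 0`.  Then the ideal generated by
`π(∂g/∂x₀), …, π(∂g/∂xₙ)` equals the Jacobian ideal of `π(g)`, i.e. the ideal generated
by `∂(π(g))/∂x₀, …, ∂(π(g))/∂x_{n−1}`: the restriction of the Jacobian ideal of `g`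
equals the Jacobian ideal of the restriction of `g`. -/
theorem stmt_19 {K : Type*} [Field K] [CharZero K] {n : ℕ} (hn : 2 ≤ n)
    (ℓ₁ ℓ₂ : MvPolynomial (Fin (n + 1)) K)
    (h1 : ℓ₁.IsHomogeneous 1) (h2 : ℓ₂.IsHomogeneous 1)
    (hindep : LinearIndependent K ![ℓ₁, ℓ₂])
    (hlast : X (Fin.last n) ∉
      Submodule.span K ({ℓ₁, ℓ₂} : Set (MvPolynomial (Fin (n + 1)) K)))
    (g : MvPolynomial (Fin (n + 1)) K) (e : ℕ) (hg : g.IsHomogeneous e)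
    (hmem : g ∈ Algebra.adjoin K ({ℓ₁, ℓ₂} : Set (MvPolynomial (Fin (n + 1)) K))) :
    Ideal.span (Set.range fun i : Fin (n + 1) =>
        restrictLast K n (pderiv i g)) =
      Ideal.span (Set.range fun i : Fin n =>
        pderiv i (restrictLast K n g)) :=
  stmt_19_general (by rintro _ (rfl | rfl); exacts [h1, h2]) hlast hmem
end
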